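/- Let f(x) = c_p x^p |sin(π/x)| 1_{x ∈ (0,1)} be a probability density on ℝ with p ≥ 2 (c_p the normalizing constant). Then there exists c > 0 such that for all x ∈ (0,1) and all r ∈ (0,1/6), (1/r) ∫_{x−r}^{x+r} f(y) dy ≥ c f(x). -/

import Mathlib

open MeasureTheory

lemma aux_sin_shift (n : ℕ) (u : ℝ) (h1 : (n:ℝ) ≤ u) (h2 : u ≤ n + 1) :
    |Real.sin (Real.pi * u)| = Real.sin (Real.pi * (u - n)) := by
  have hpi := Real.pi_pos
  have h : Real.pi * u = Real.pi * (u - n) + n * Real.pi := by ring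
  rw [h, Real.sin_add_nat_mul_pi, abs_mul, abs_pow, abs_neg, abs_one, one_pow, one_mul]
  apply abs_of_nonneg
  apply Real.sin_nonneg_of_nonneg_of_le_pi
  · apply mul_nonneg hpi.le; linarith
  · nlinarith

lemma aux_persp (n : ℕ) (x e t y : ℝ) (hx : 0 < x) (he : 0 < e)
    (hx1 : (n:ℝ) ≤ 1 / x) (hx2 : 1 / x ≤ n + 1)
    (he1 : (n:ℝ) ≤ 1 / e) (he2 : 1 / e ≤ n + 1) (ht0 : 0 ≤ t) (ht1 : t ≤ 1 / 2)
    (hy : y = (1 - t) * x + t * e) :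
    (1 / 2) * (x * |Real.sin (Real.pi / x)|) ≤ y * |Real.sin (Real.pi / y)| := by
  have hpi := Real.pi_pos
  have hy0 : 0 < y := by
    rw [hy]
    have : 0 < (1 - t) * x := mul_pos (by linarith) hx
    have : 0 ≤ t * e := mul_nonneg ht0 he.le
    linarith
  set a := (1 - t) * x / y with ha
  set b := t * e / y with hb
  have ha0 : 0 ≤ a := div_nonneg (mul_nonneg (by linarith) hx.le) hy0.le
  have hb0 : 0 ≤ b := div_nonneg (mul_nonneg ht0 he.le) hy0.le
  have hab : a + b = 1 := by
    rw [ha, hb, ← add_div, ← hy]; exact div_self hy0.ne'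
  have hyi : 1 / y = a * (1 / x) + b * (1 / e) := by
    rw [ha, hb]; field_simp; ring
  have hy1 : (n:ℝ) ≤ 1 / y := by
    rw [hyi]; nlinarith
  have hy2 : 1 / y ≤ n + 1 := by
    rw [hyi]; nlinarith
  have e1 : ∀ z : ℝ, Real.pi / z = Real.pi * (1 / z) := fun z => by ring
  rw [e1 x, e1 y, aux_sin_shift n _ hx1 hx2, aux_sin_shift n _ hy1 hy2]
  have hc := strictConcaveOn_sin_Icc.concaveOn.2
    (x := Real.pi * (1 / x - n)) (y := Real.pi * (1 / e - n))
    ⟨mul_nonneg hpi.le (by linarith), by nlinarith⟩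
    ⟨mul_nonneg hpi.le (by linarith), by nlinarith⟩ ha0 hb0 hab
  simp only [smul_eq_mul] at hc
  have hse : 0 ≤ Real.sin (Real.pi * (1 / e - n)) :=
    Real.sin_nonneg_of_nonneg_of_le_pi (mul_nonneg hpi.le (by linarith)) (by nlinarith)
  have hsx : 0 ≤ Real.sin (Real.pi * (1 / x - n)) :=
    Real.sin_nonneg_of_nonneg_of_le_pi (mul_nonneg hpi.le (by linarith)) (by nlinarith)
  have harg : a * (Real.pi * (1 / x - n)) + b * (Real.pi * (1 / e - n))
      = Real.pi * (1 / y - n) := by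
    rw [hyi]; linear_combination (-Real.pi * n) * hab
  rw [harg] at hc
  have h3 : a * Real.sin (Real.pi * (1 / x - n)) ≤ Real.sin (Real.pi * (1 / y - n)) := by
    have := mul_nonneg hb0 hse
    linarith
  have h4 := mul_le_mul_of_nonneg_left h3 hy0.le
  have h5 : y * (a * Real.sin (Real.pi * (1 / x - n)))
      = (1 - t) * (x * Real.sin (Real.pi * (1 / x - n))) := by
    rw [ha]; field_simp
  rw [h5] at h4
  have h6 := mul_nonneg hx.le hsx
  nlinarith

lemma aux_pow (p : ℝ) (hp : 2 ≤ p) (x y s w : ℝ) (hx : 0 < x) (hy : x / 2 ≤ y) (hs : 0 ≤ s)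
    (hw : 0 ≤ w) (h : (1 / 2) * (x * s) ≤ y * w) :
    (1 / 2) ^ p * (x ^ p * s) ≤ y ^ p * w := by
  have hy0 : 0 < y := by linarith
  have e1 : ∀ z : ℝ, 0 < z → z ^ p = z ^ (p - 1) * z := fun z hz => by
    rw [Real.rpow_sub_one hz.ne']; field_simp
  have h1 : (1 / 2 : ℝ) ^ (p-1) * x ^ (p - 1) ≤ y ^ (p - 1) := by
    rw [← Real.mul_rpow (by norm_num) hx.le]
    exact Real.rpow_le_rpow (by positivity) (by linarith) (by linarith)
  rw [e1 (1/2) (by norm_num), e1 x hx, e1 y hy0]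
  calc _ = ((1 / 2 : ℝ) ^ (p-1) * x ^ (p - 1)) * ((1 / 2) * (x * s)) := by ring
    _ ≤ y ^ (p - 1) * (y * w) := by
        apply mul_le_mul h1 h (by positivity) (by positivity)
    _ = _ := by ring

lemma aux_int (x r : ℝ) (hx : 0 < x) (hr : 0 < r) (h : (x + r) ^ 2 ≤ 3 * r) :
    r / 50 ≤ ∫ y in x..(x + r), Real.sin (Real.pi / y) ^ 2 := by
  have hpi := Real.pi_pos
  have hpi2 := Real.pi_gt_d2
  let G : ℝ → ℝ := fun y => y / 2 - y ^ 2 / (4 * Real.pi)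
    + y ^ 2 * Real.sin (2 * Real.pi / y) / (4 * Real.pi)
  let g : ℝ → ℝ := fun y => 1 / 2 - y / (2 * Real.pi)
    + (2 * y * Real.sin (2 * Real.pi / y) - 2 * Real.pi * Real.cos (2 * Real.pi / y))
      / (4 * Real.pi)
  have hpos : ∀ y ∈ Set.uIcc x (x + r), 0 < y := by
    intro y hy
    rw [Set.uIcc_of_le (by linarith)] at hy
    linarith [hy.1]
  have hd : ∀ y ∈ Set.uIcc x (x + r), HasDerivAt G (g y) y := by
    intro y hy
    have hy0 := hpos y hy
    have hq : HasDerivAt (fun y : ℝ => 2 * Real.pi / y) (-(2 * Real.pi) / y ^ 2) y := by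
      have := (hasDerivAt_inv hy0.ne').const_mul (2 * Real.pi)
      simp only [div_eq_mul_inv]
      exact this.congr_deriv (by ring)
    have h1 := (((hasDerivAt_id y).div_const 2).sub
      (((hasDerivAt_id y).pow 2).div_const (4 * Real.pi))).add
      ((((hasDerivAt_id y).pow 2).mul hq.sin).div_const (4 * Real.pi))
    refine HasDerivAt.congr_deriv (f := G) h1 ?_
    simp only [g, Pi.pow_apply, id]
    field_simp
    push_cast
    ring
  have hcq : ∀ c : ℝ, ContinuousOn (fun y : ℝ => c / y) (Set.uIcc x (x + r)) := fun c =>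
    continuousOn_const.div continuousOn_id (fun y hy => (hpos y hy).ne')
  have hgc : ContinuousOn g (Set.uIcc x (x + r)) := by
    have h1 := Real.continuous_sin.comp_continuousOn (hcq (2 * Real.pi))
    have h2 := Real.continuous_cos.comp_continuousOn (hcq (2 * Real.pi))
    simp only [Function.comp_def] at h1 h2
    fun_prop
  have hsc : ContinuousOn (fun y => Real.sin (Real.pi / y) ^ 2) (Set.uIcc x (x + r)) :=
    (Real.continuous_sin.comp_continuousOn (hcq Real.pi)).pow 2
  have hF := intervalIntegral.integral_eq_sub_of_hasDerivAt hd hgc.intervalIntegrable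
  have hm : ∫ y in x..(x + r), g y ≤ ∫ y in x..(x + r), Real.sin (Real.pi / y) ^ 2 := by
    apply intervalIntegral.integral_mono_on (by linarith) hgc.intervalIntegrable
      hsc.intervalIntegrable
    intro y hy
    have hy0 : 0 < y := by linarith [hy.1]
    have e : 2 * Real.pi / y = 2 * (Real.pi / y) := by ring
    have hs : Real.sin (Real.pi / y) ^ 2 = 1 / 2 - Real.cos (2 * Real.pi / y) / 2 := by
      rw [e, Real.sin_sq_eq_half_sub]
    have hg : g y = 1 / 2 - Real.cos (2 * Real.pi / y) / 2
        - y / (2 * Real.pi) * (1 - Real.sin (2 * Real.pi / y)) := by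
      simp only [g]; field_simp; ring
    rw [hs, hg]
    have := mul_nonneg (div_nonneg hy0.le (by positivity : 0 ≤ 2 * Real.pi))
      (sub_nonneg.2 (Real.sin_le_one (2 * Real.pi / y)))
    linarith
  refine le_trans ?_ hm
  rw [hF]
  have hs1 := Real.neg_one_le_sin (2 * Real.pi / (x + r))
  have hs2 := Real.sin_le_one (2 * Real.pi / x)
  have e : G (x + r) - G x = r / 2 - (2 * (x + r) ^ 2
      - (x + r) ^ 2 * (1 + Real.sin (2 * Real.pi / (x + r)))
      - x ^ 2 * (1 - Real.sin (2 * Real.pi / x))) / (4 * Real.pi) := by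
    simp only [G]; field_simp; ring
  rw [e]
  have k : (2 * (x + r) ^ 2
      - (x + r) ^ 2 * (1 + Real.sin (2 * Real.pi / (x + r)))
      - x ^ 2 * (1 - Real.sin (2 * Real.pi / x))) / (4 * Real.pi) ≤ 12 / 25 * r := by
    rw [div_le_iff₀ (by positivity)]
    have h1 := mul_nonneg (sq_nonneg (x + r)) (by linarith : 0 ≤ 1 + Real.sin (2 * Real.pi / (x + r)))
    have h2 := mul_nonneg (sq_nonneg x) (by linarith : 0 ≤ 1 - Real.sin (2 * Real.pi / x))
    nlinarith
  linarith

theorem stmt_19 (p : ℝ) (hp : 2 ≤ p) (cp : ℝ) (hcp : 0 < cp)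
    (f : ℝ → ℝ)
    (hf : ∀ x : ℝ, f x = if x ∈ Set.Ioo (0:ℝ) 1
      then cp * x ^ p * |Real.sin (Real.pi / x)| else 0)
    (hnorm : ∫ x, f x = 1) :
    ∃ c : ℝ, 0 < c ∧ ∀ x ∈ Set.Ioo (0:ℝ) 1, ∀ r ∈ Set.Ioo (0:ℝ) (1/6),
      c * f x ≤ (1/r) * ∫ y in (x-r)..(x+r), f y := by
  have hint : Integrable f := by
    by_contra h
    rw [integral_undef h] at hnorm
    norm_num at hnorm
  have hf0 : ∀ y, 0 ≤ f y := by
    intro y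
    rw [hf]
    split_ifs with h
    · have := h.1
      positivity
    · exact le_rfl
  have hf1 : ∀ y, 0 < y → y ≤ 1 → f y = cp * y ^ p * |Real.sin (Real.pi / y)| := by
    intro y h0 h1
    rw [hf]
    split_ifs with h
    · rfl
    · have : y = 1 := le_antisymm h1 (not_lt.1 fun h2 => h ⟨h0, h2⟩)
      subst this
      simp
  -- a subinterval bound
  have hsub : ∀ x r u v : ℝ, x - r ≤ u → u ≤ v → v ≤ x + r →
      ∫ y in u..v, f y ≤ ∫ y in (x-r)..(x+r), f y := by
    intro x r u v h1 h2 h3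
    apply intervalIntegral.integral_mono_interval h1 h2 h3
    · exact Filter.Eventually.of_forall hf0
    · exact hint.intervalIntegrable
  set q : ℝ := (1 / 2) ^ p with hq
  have hq0 : 0 < q := by positivity
  have hq1 : q ≤ 1 := Real.rpow_le_one (by norm_num) (by norm_num) (by linarith)
  refine ⟨q / 50, by positivity, ?_⟩
  rintro x ⟨hx0, hx1⟩ r ⟨hr0, hr1⟩
  rw [one_div, inv_mul_eq_div, le_div_iff₀ hr0]
  rcases le_or_gt (x ^ 2) r with hxr | hxr
  · have hx42 : x ≤ 42 / 100 := by nlinarith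
    have h3 : (x + r) ^ 2 ≤ 3 * r := by nlinarith
    have hI := aux_int x r hx0 hr0 h3
    refine le_trans ?_ (hsub x r x (x + r) (by linarith) (by linarith) le_rfl)
    have hsc : ContinuousOn (fun y => Real.sin (Real.pi / y) ^ 2) (Set.uIcc x (x + r)) := by
      refine (Real.continuous_sin.comp_continuousOn
        (continuousOn_const.div continuousOn_id (fun y hy => ?_))).pow 2
      rw [Set.uIcc_of_le (by linarith)] at hy
      simp only [id]
      linarith [hy.1]
    have hm : ∫ y in x..(x + r), cp * x ^ p * Real.sin (Real.pi / y) ^ 2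
        ≤ ∫ y in x..(x + r), f y := by
      apply intervalIntegral.integral_mono_on (by linarith)
        (hsc.intervalIntegrable.const_mul _) hint.intervalIntegrable
      intro y hy
      have hy0 : 0 < y := by linarith [hy.1]
      rw [hf1 y hy0 (by linarith [hy.2])]
      have h1 : x ^ p ≤ y ^ p := Real.rpow_le_rpow hx0.le hy.1 (by linarith)
      have h2 : Real.sin (Real.pi / y) ^ 2 ≤ |Real.sin (Real.pi / y)| := by
        rw [← sq_abs]
        have := Real.abs_sin_le_one (Real.pi / y)
        nlinarith [abs_nonneg (Real.sin (Real.pi / y))]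
      have h3 : cp * x ^ p ≤ cp * y ^ p := mul_le_mul_of_nonneg_left h1 hcp.le
      exact mul_le_mul h3 h2 (sq_nonneg _) (by positivity)
    rw [intervalIntegral.integral_const_mul] at hm
    refine le_trans ?_ hm
    rw [hf1 x hx0 hx1.le]
    have hA : 0 < cp * x ^ p := by positivity
    have hs := Real.abs_sin_le_one (Real.pi / x)
    calc q / 50 * (cp * x ^ p * |Real.sin (Real.pi / x)|) * r
        = (cp * x ^ p) * ((r / 50) * (q * |Real.sin (Real.pi / x)|)) := by ring
      _ ≤ (cp * x ^ p) * ((r / 50) * 1) := by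
          gcongr
          exact mul_le_one₀ hq1 (abs_nonneg _) hs
      _ ≤ _ := by rw [mul_one]; gcongr
  · -- r < x ^ 2
    obtain ⟨n, hn1, hn2⟩ : ∃ n : ℕ, (n:ℝ) ≤ 1 / x ∧ 1 / x < n + 1 :=
      ⟨⌊1 / x⌋₊, Nat.floor_le (by positivity), Nat.lt_floor_add_one _⟩
    have hx1' : 1 < 1 / x := by rw [lt_div_iff₀ hx0]; linarith
    have hn : 1 ≤ n := by
      by_contra h
      have : n = 0 := by omega
      subst this
      norm_num at hn2
      rw [one_div] at hx1'
      linarith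
    have hnR : (1:ℝ) ≤ n := by exact_mod_cast hn
    have hn0 : (0:ℝ) < n := by linarith
    have hxb : x ≤ 1 / n := by rw [le_div_iff₀ hn0]; rw [le_div_iff₀ hx0] at hn1; linarith
    have hxa : 1 / (n + 1 : ℝ) ≤ x := by
      rw [div_le_iff₀ (by linarith)]; rw [div_lt_iff₀ hx0] at hn2; linarith
    have hgap : r ≤ 2 * (1 / (n:ℝ) - 1 / (n + 1)) := by
      have h1 : x ^ 2 ≤ (1 / (n:ℝ)) ^ 2 := by gcongr
      have h2 : (1 / (n:ℝ)) ^ 2 ≤ 2 * (1 / (n:ℝ) - 1 / (n + 1)) := by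
        rw [← sub_nonneg]
        have : 2 * (1 / (n:ℝ) - 1 / (n + 1)) - (1 / (n:ℝ)) ^ 2 = (n - 1) / (n ^ 2 * (n + 1)) := by
          field_simp; ring
        rw [this]
        exact div_nonneg (by linarith) (by positivity)
      linarith
    have hb1 : 1 / (n:ℝ) ≤ 1 := by rw [div_le_one hn0]; exact hnR
    have hab : 1 / (n:ℝ) ≤ 2 * (1 / (n + 1 : ℝ)) := by
      rw [mul_one_div, div_le_div_iff₀ hn0 (by linarith)]; linarith
    have ha0 : 0 < 1 / (n + 1 : ℝ) := by positivity
    have hb0 : 0 < 1 / (n : ℝ) := by positivity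
    -- pointwise bound
    have key : ∀ e t y : ℝ, 1 / (n + 1 : ℝ) ≤ e → e ≤ 1 / n → 0 ≤ t → t ≤ 1 / 2 →
        y = (1 - t) * x + t * e → q * f x ≤ f y := by
      intro e t y he1 he2 ht0 ht1 hy
      have he0 : 0 < e := by linarith
      have hya : 1 / (n + 1 : ℝ) ≤ y := by rw [hy]; nlinarith
      have hyb : y ≤ 1 / (n : ℝ) := by rw [hy]; nlinarith
      have hP := aux_persp n x e t y hx0 he0 hn1 hn2.le
        (by rw [le_div_iff₀ he0]; rw [le_div_iff₀ hn0] at he2; linarith)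
        (by rw [div_le_iff₀ he0]; rw [div_le_iff₀ (by linarith)] at he1; linarith) ht0 ht1 hy
      have hQ := aux_pow p hp x y _ _ hx0 (by linarith) (abs_nonneg _) (abs_nonneg _) hP
      rw [hf1 x hx0 hx1.le, hf1 y (by linarith) (by linarith)]
      have := mul_le_mul_of_nonneg_left hQ hcp.le
      calc _ = cp * ((1 / 2) ^ p * (x ^ p * |Real.sin (Real.pi / x)|)) := by rw [hq]; ring
        _ ≤ _ := this
        _ = _ := by ring
    have fin : ∀ u : ℝ, x - r ≤ u → u + r / 8 ≤ x + r →
        (∀ y ∈ Set.Icc u (u + r / 8), q * f x ≤ f y) →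
        q / 50 * f x * r ≤ ∫ y in (x-r)..(x+r), f y := by
      intro u h1 h2 h3
      refine le_trans ?_ (hsub x r u (u + r / 8) h1 (by linarith) h2)
      have hm : ∫ y in u..(u + r / 8), q * f x ≤ ∫ y in u..(u + r / 8), f y :=
        intervalIntegral.integral_mono_on (by linarith) intervalIntegrable_const
          hint.intervalIntegrable h3
      refine le_trans ?_ hm
      rw [intervalIntegral.integral_const, smul_eq_mul]
      have := mul_nonneg (mul_nonneg hq0.le (hf0 x)) hr0.le
      nlinarith
    rcases le_total (x - 1 / (n + 1 : ℝ)) (1 / n - x) with hc | hc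
    · apply fin x (by linarith) (by linarith)
      intro y hy
      have hd : 0 < 1 / (n:ℝ) - x := by linarith
      apply key (1 / n) ((y - x) / (1 / n - x)) y (by linarith) le_rfl
        (div_nonneg (by linarith [hy.1]) hd.le)
      · rw [div_le_iff₀ hd]; linarith [hy.2]
      · have := div_mul_cancel₀ (y - x) hd.ne'
        linear_combination -this
    · apply fin (x - r / 8) (by linarith) (by linarith)
      intro y hy
      have hd : 0 < x - 1 / (n + 1 : ℝ) := by linarith
      apply key (1 / (n + 1)) ((x - y) / (x - 1 / (n + 1))) y le_rfl (by linarith)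
        (div_nonneg (by linarith [hy.2]) hd.le)
      · rw [div_le_iff₀ hd]; linarith [hy.1]
      · have := div_mul_cancel₀ (x - y) hd.ne'
        linear_combination this
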